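/- Fix θ ∈ S^{d−1} and let P_{2,a}(ℝ^d, θ) be the set of μ ∈ P_2(ℝ^d) such that P_θ#μ is atomless. Then PS_θ is a metric on P_{2,a}(ℝ^d, θ); in particular, for all μ1, μ2, μ3 ∈ P_{2,a}(ℝ^d, θ), PS_θ(μ1, μ3) ≤ PS_θ(μ1, μ2) + PS_θ(μ2, μ3). -/

import Mathlib

open MeasureTheory Filter Topology ProbabilityTheory
open scoped ENNReal RealInnerProductSpace Classical

noncomputable section

/-- Euclidean space ℝ^d. -/
abbrev Euc (d : ℕ) : Type := EuclideanSpace ℝ (Fin d)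

/-- `P2` : Borel probability measures with finite second moment. -/
def P2 {E : Type*} [NormedAddCommGroup E] [MeasurableSpace E] : Set (Measure E) :=
  {μ | IsProbabilityMeasure μ ∧ Integrable (fun x => ‖x‖ ^ 2) μ}

/-- Couplings between two measures. -/
def Coupling {E F : Type*} [MeasurableSpace E] [MeasurableSpace F]
    (μ : Measure E) (ν : Measure F) : Set (Measure (E × F)) :=
  {π | IsProbabilityMeasure π ∧ π.map Prod.fst = μ ∧ π.map Prod.snd = ν}

/-- Quadratic transport cost of a plan. -/
def tCost {E : Type*} [NormedAddCommGroup E] [MeasurableSpace E]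
    (π : Measure (E × E)) : ℝ :=
  ∫ p, ‖p.1 - p.2‖ ^ 2 ∂π

/-- Squared 2-Wasserstein distance. -/
def W2sq {E : Type*} [NormedAddCommGroup E] [MeasurableSpace E] (μ ν : Measure E) : ℝ :=
  sInf (tCost '' Coupling μ ν)

/-- 2-Wasserstein distance. -/
def W2 {E : Type*} [NormedAddCommGroup E] [MeasurableSpace E] (μ ν : Measure E) : ℝ :=
  Real.sqrt (W2sq μ ν)

/-- Optimal transport plans for the quadratic cost. -/
def OptPlan {E : Type*} [NormedAddCommGroup E] [MeasurableSpace E]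
    (μ ν : Measure E) : Set (Measure (E × E)) :=
  {π | π ∈ Coupling μ ν ∧ tCost π = W2sq μ ν}

/-- `Gamma ν μ1 μ2` : probability measures on `E × E × E` whose (1,2)-marginal is an optimal
plan between `ν` and `μ1` and whose (1,3)-marginal is an optimal plan between `ν` and `μ2`. -/
def Gamma {E : Type*} [NormedAddCommGroup E] [MeasurableSpace E]
    (ν μ1 μ2 : Measure E) : Set (Measure (E × E × E)) :=
  {ρ | IsProbabilityMeasure ρ ∧
    ρ.map (fun p => (p.1, p.2.1)) ∈ OptPlan ν μ1 ∧
    ρ.map (fun p => (p.1, p.2.2)) ∈ OptPlan ν μ2}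

/-- Cost `∫ ‖x1 − x2‖² dρ(y, x1, x2)` of a 3-plan. -/
def pivotCost {E : Type*} [NormedAddCommGroup E] [MeasurableSpace E]
    (ρ : Measure (E × E × E)) : ℝ :=
  ∫ p, ‖p.2.1 - p.2.2‖ ^ 2 ∂ρ

/-- Squared ν-based Wasserstein discrepancy. -/
def Wnusq {E : Type*} [NormedAddCommGroup E] [MeasurableSpace E]
    (ν μ1 μ2 : Measure E) : ℝ :=
  sInf (pivotCost '' Gamma ν μ1 μ2)

/-- ν-based Wasserstein discrepancy. -/
def Wnu {E : Type*} [NormedAddCommGroup E] [MeasurableSpace E]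
    (ν μ1 μ2 : Measure E) : ℝ :=
  Real.sqrt (Wnusq ν μ1 μ2)

/-- Weak convergence of a sequence of measures (against bounded continuous functions). -/
def WeakConv {E : Type*} [MeasurableSpace E] [TopologicalSpace E]
    (μs : ℕ → Measure E) (μ : Measure E) : Prop :=
  ∀ f : BoundedContinuousFunction E ℝ,
    Tendsto (fun n => ∫ x, f x ∂(μs n)) atTop (𝓝 (∫ x, f x ∂μ))

/-- Quantile function (pseudo-inverse c.d.f.) of a measure on ℝ. -/
def quantile (ν : Measure ℝ) (t : ℝ) : ℝ :=
  sInf {s : ℝ | ENNReal.ofReal t ≤ ν (Set.Iic s)}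

/-- Pushforward of `μ` by the projection `P_θ : x ↦ ⟪θ, x⟫`. -/
def projLine {d : ℕ} (θ : Euc d) (μ : Measure (Euc d)) : Measure ℝ :=
  μ.map (fun x => ⟪θ, x⟫)

/-- `μ_θ[μ1, μ2]` : the (unique) Wasserstein mean of `Q_θ#μ1` and `Q_θ#μ2`, given by the
explicit quantile formula `[(½ F_{ν1}^{[-1]} + ½ F_{ν2}^{[-1]})·θ]#L_{[0,1]}`. -/
def pivotMiddle {d : ℕ} (θ : Euc d) (μ1 μ2 : Measure (Euc d)) : Measure (Euc d) :=
  (volume.restrict (Set.Icc (0 : ℝ) 1)).map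
    (fun t => ((1 / 2) * quantile (projLine θ μ1) t
      + (1 / 2) * quantile (projLine θ μ2) t) • θ)

/-- Squared Pivot Sliced discrepancy. -/
def PSsq {d : ℕ} (θ : Euc d) (μ1 μ2 : Measure (Euc d)) : ℝ :=
  Wnusq (pivotMiddle θ μ1 μ2) μ1 μ2

/-- Pivot Sliced discrepancy. -/
def PS {d : ℕ} (θ : Euc d) (μ1 μ2 : Measure (Euc d)) : ℝ :=
  Real.sqrt (PSsq θ μ1 μ2)

/-- `π_θ[μ1, μ2]` : the unique optimal 1D plan between `P_θ#μ1` and `P_θ#μ2`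
(co-monotone quantile coupling). -/
def piTheta {d : ℕ} (θ : Euc d) (μ1 μ2 : Measure (Euc d)) : Measure (ℝ × ℝ) :=
  (volume.restrict (Set.Icc (0 : ℝ) 1)).map
    (fun t => (quantile (projLine θ μ1) t, quantile (projLine θ μ2) t))

/-- `Ω_θ(μ1, μ2)` : couplings of `μ1, μ2` whose projection by `(P_θ, P_θ)` is `π_θ[μ1, μ2]`. -/
def OmegaTheta {d : ℕ} (θ : Euc d) (μ1 μ2 : Measure (Euc d)) :
    Set (Measure (Euc d × Euc d)) :=
  {ω | ω ∈ Coupling μ1 μ2 ∧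
    ω.map (fun p => (⟪θ, p.1⟫, ⟪θ, p.2⟫)) = piTheta θ μ1 μ2}

/-- Squared constrained Wasserstein discrepancy `CW_θ²`. -/
def CWsq {d : ℕ} (θ : Euc d) (μ1 μ2 : Measure (Euc d)) : ℝ :=
  sInf (tCost '' OmegaTheta θ μ1 μ2)

/-- Wasserstein means: minimisers of `μ ↦ W₂²(μ1, μ) + W₂²(μ, μ2)` over `P2`. -/
def WMean {d : ℕ} (μ1 μ2 : Measure (Euc d)) : Set (Measure (Euc d)) :=
  {μ | μ ∈ (P2 : Set (Measure (Euc d))) ∧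
    ∀ μ' ∈ (P2 : Set (Measure (Euc d))),
      W2sq μ1 μ + W2sq μ μ2 ≤ W2sq μ1 μ' + W2sq μ' μ2}

/-- Uniform empirical measure `1/n ∑ δ_{x_i}`. -/
def empMeasure {d n : ℕ} (x : Fin n → Euc d) : Measure (Euc d) :=
  (n : ℝ≥0∞)⁻¹ • ∑ i, Measure.dirac (x i)

/-- Measures in `P2` whose projection `P_θ#μ` is atomless. -/
def P2a {d : ℕ} (θ : Euc d) : Set (Measure (Euc d)) :=
  {μ | μ ∈ (P2 : Set (Measure (Euc d))) ∧ ∀ s : ℝ, projLine θ μ {s} = 0}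

/-!
When the projections on `θ` are atomless, each `μ` assigns to its points a uniformly distributed
rank in direction `θ`, and `Ω_θ(μ1, μ2)` is the set of couplings that preserve the rank. For a plan
between the pivot and `μ1`, the Pythagorean theorem splits the cost into the second moment of `μ1`
orthogonal to `θ`, which does not depend on the plan, and a cost along `θ`. By the parallelogram law
at the midpoint of two quantile functions, the latter is a constant plus half of two costs on the
line, each least when ranks are preserved; one of them is then zero, and vanishes only in that case.
Hence the optimal plans from the pivot are exactly the plans that preserve the rank, and `PS_θ` is
the infimum over `Ω_θ(μ1, μ2)` of the `L²` cost.

Rank-preserving couplings can be glued together, so the Minkowski inequality gives the triangle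
inequality. For separation, which does not require the infimum to be attained, the characteristic
functions of `μ1` and `μ2` differ at `t` by at most `‖t‖ * PS_θ(μ1, μ2)`.
-/

section RearrangementInequality

/-- The open triangle `x < z.1 < z.2 < y` of the plane, empty unless `x < y`. Its area is half the
squared distance from `x` to `y`, which turns quadratic costs into probabilities of events. -/
def triangle (x y : ℝ) : Set (ℝ × ℝ) :=
  {z | x < z.1 ∧ z.1 < z.2 ∧ z.2 < y}

lemma triangle_eq_empty {x y : ℝ} (h : y ≤ x) : triangle x y = ∅ :=
  Set.eq_empty_of_forall_notMem fun _ ⟨hx, hz, hy⟩ => (hx.trans (hz.trans hy)).not_ge h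

lemma triangle_eq_regionBetween (x y : ℝ) :
    triangle x y = regionBetween id (fun _ => y) (Set.Ioo x y) := by
  ext z
  exact ⟨fun ⟨hx, hz, hy⟩ => ⟨⟨hx, hz.trans hy⟩, hz, hy⟩, fun ⟨⟨hx, _⟩, hz, hy⟩ => ⟨hx, hz, hy⟩⟩

lemma measurableSet_triangle (x y : ℝ) : MeasurableSet (triangle x y) := by
  rw [triangle_eq_regionBetween]
  exact measurableSet_regionBetween measurable_id measurable_const measurableSet_Ioo

lemma volume_triangle {x y : ℝ} (h : x ≤ y) :
    volume (triangle x y) = ENNReal.ofReal ((x - y) ^ 2 / 2) := by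
  rw [triangle_eq_regionBetween, Measure.volume_eq_prod, volume_regionBetween_eq_integral
    (continuous_id.integrableOn_Ioc.mono_set Set.Ioo_subset_Ioc_self)
    (integrableOn_const (by simp)) measurableSet_Ioo fun _ ht => ht.2.le,
    ← integral_Ioc_eq_integral_Ioo, ← intervalIntegral.integral_of_le h]
  have : ∫ t in x..y, (y - t) = (x - y) ^ 2 / 2 := by
    rw [intervalIntegral.integral_sub (by simp) (by simp)]
    simp only [intervalIntegral.integral_const, smul_eq_mul, integral_id]
    ring
  exact congrArg ENNReal.ofReal this

lemma ofReal_sub_sq_eq_volume_triangle (x y : ℝ) :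
    ENNReal.ofReal ((x - y) ^ 2) = 2 * (volume (triangle x y) + volume (triangle y x)) := by
  have two_mul_half (c : ℝ) : ENNReal.ofReal c = 2 * ENNReal.ofReal (c / 2) := by
    rw [← ENNReal.ofReal_ofNat 2, ← ENNReal.ofReal_mul zero_le_two, mul_div_cancel₀ _ two_ne_zero]
  rcases le_total x y with h | h
  · rw [triangle_eq_empty h, measure_empty, add_zero, volume_triangle h, two_mul_half]
  · rw [triangle_eq_empty h, measure_empty, zero_add, volume_triangle h, two_mul_half, sub_sq_comm]

variable {Ω Ω' : Type*} [MeasurableSpace Ω] [MeasurableSpace Ω'] {P : Measure Ω} {P' : Measure Ω'}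
  {X Y : Ω → ℝ} {X' Y' : Ω' → ℝ}

lemma nullMeasurableSet_mem_triangle (hX : AEMeasurable X P) (hY : AEMeasurable Y P) :
    NullMeasurableSet {p : Ω × ℝ × ℝ | p.2 ∈ triangle (X p.1) (Y p.1)} (P.prod volume) :=
  have hfst : AEMeasurable (fun p : Ω × ℝ × ℝ => p.2.1) (P.prod volume) := by fun_prop
  have hsnd : AEMeasurable (fun p : Ω × ℝ × ℝ => p.2.2) (P.prod volume) := by fun_prop
  (nullMeasurableSet_lt hX.comp_fst hfst).inter
    ((nullMeasurableSet_lt hfst hsnd).inter (nullMeasurableSet_lt hsnd hY.comp_fst))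

lemma aemeasurable_volume_triangle (hX : AEMeasurable X P) (hY : AEMeasurable Y P) :
    AEMeasurable (fun ω => volume (triangle (X ω) (Y ω))) P := by
  have h := (aemeasurable_const (b := (1 : ℝ≥0∞))).indicator₀
    (nullMeasurableSet_mem_triangle hX hY)
  exact h.lintegral_prod_right'.congr
    (.of_forall fun ω => lintegral_indicator_one (measurableSet_triangle (X ω) (Y ω)))

lemma lintegral_volume_triangle [SFinite P] (hX : AEMeasurable X P) (hY : AEMeasurable Y P) :
    ∫⁻ ω, volume (triangle (X ω) (Y ω)) ∂P = ∫⁻ z, P {ω | z ∈ triangle (X ω) (Y ω)} := by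
  have h := nullMeasurableSet_mem_triangle hX hY
  calc ∫⁻ ω, volume (triangle (X ω) (Y ω)) ∂P
      = ∫⁻ ω, ∫⁻ z, (triangle (X ω) (Y ω)).indicator 1 z ∂volume ∂P :=
        lintegral_congr fun ω => (lintegral_indicator_one (measurableSet_triangle _ _)).symm
    _ = ∫⁻ z, ∫⁻ ω, {ω | z ∈ triangle (X ω) (Y ω)}.indicator 1 ω ∂P :=
        lintegral_lintegral_swap (aemeasurable_one.indicator₀ h)
    _ = ∫⁻ z, P {ω | z ∈ triangle (X ω) (Y ω)} := by
        refine lintegral_congr fun z => lintegral_indicator_one₀ ?_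
        exact (nullMeasurableSet_lt hX aemeasurable_const).inter
          ((MeasurableSet.const (z.1 < z.2)).nullMeasurableSet.inter
            (nullMeasurableSet_lt aemeasurable_const hY))

lemma lintegral_ofReal_sub_sq_eq (hX : AEMeasurable X P) (hY : AEMeasurable Y P) :
    ∫⁻ ω, ENNReal.ofReal ((X ω - Y ω) ^ 2) ∂P =
      2 * (∫⁻ ω, volume (triangle (X ω) (Y ω)) ∂P + ∫⁻ ω, volume (triangle (Y ω) (X ω)) ∂P) := by
  simp only [ofReal_sub_sq_eq_volume_triangle]
  rw [lintegral_const_mul' _ _ (by simp), lintegral_add_left' (aemeasurable_volume_triangle hX hY)]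

variable [IsFiniteMeasure P']

lemma measure_lt_lt_le_of_monovaryOn (hX : IdentDistrib X' X P' P) (hY : IdentDistrib Y' Y P' P)
    {I : Set Ω'} (hI : ∀ᵐ ω ∂P', ω ∈ I) (hXY : MonovaryOn X' Y' I) (s t : ℝ) :
    P' {ω | X' ω < s ∧ t < Y' ω} ≤ P {ω | X ω < s ∧ t < Y ω} := by
  have hIic := hY.aemeasurable_fst.nullMeasurableSet_preimage (measurableSet_Iic (a := t))
  -- By comonotonicity one of these two events contains the other up to a null set, so their
  -- difference is as small as their probabilities allow.
  have hle : P' (X' ⁻¹' Set.Iio s \ Y' ⁻¹' Set.Iic t)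
      ≤ P' (X' ⁻¹' Set.Iio s) - P' (Y' ⁻¹' Set.Iic t) := by
    by_cases h : ∃ ω ∈ I, X' ω < s ∧ t < Y' ω
    · obtain ⟨ω, hω, hs, ht⟩ := h
      have hsub : Y' ⁻¹' Set.Iic t ≤ᵐ[P'] X' ⁻¹' Set.Iio s := by
        filter_upwards [hI] with ω' hω' hle
        exact (hXY hω' hω (lt_of_le_of_lt hle ht)).trans_lt hs
      rw [measure_sdiff' _ hIic (measure_ne_top _ _),
        measure_congr (union_ae_eq_left_iff_ae_subset.2 hsub)]
    · have hnull : P' (X' ⁻¹' Set.Iio s \ Y' ⁻¹' Set.Iic t) = 0 :=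
        measure_mono_null (fun ω hω hωI => h ⟨ω, hωI, hω.1, not_le.1 hω.2⟩) hI
      simp [hnull]
  rw [hX.measure_mem_eq measurableSet_Iio, hY.measure_mem_eq measurableSet_Iic] at hle
  simpa [Set.sdiff_eq, Set.ofPred_and, Set.compl_ofPred, Set.preimage] using
    hle.trans le_measure_sdiff

lemma lintegral_volume_triangle_le_of_monovaryOn [SFinite P] (hX : IdentDistrib X' X P' P)
    (hY : IdentDistrib Y' Y P' P) {I : Set Ω'} (hI : ∀ᵐ ω ∂P', ω ∈ I)
    (hXY : MonovaryOn X' Y' I) :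
    ∫⁻ ω, volume (triangle (X' ω) (Y' ω)) ∂P' ≤ ∫⁻ ω, volume (triangle (X ω) (Y ω)) ∂P := by
  rw [lintegral_volume_triangle hX.aemeasurable_fst hY.aemeasurable_fst,
    lintegral_volume_triangle hX.aemeasurable_snd hY.aemeasurable_snd]
  refine lintegral_mono fun z => ?_
  by_cases hz : z.1 < z.2
  · simpa [triangle, hz] using measure_lt_lt_le_of_monovaryOn hX hY hI hXY z.1 z.2
  · simp [triangle, hz]

theorem lintegral_ofReal_sub_sq_le_of_monovaryOn [SFinite P] (hX : IdentDistrib X' X P' P)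
    (hY : IdentDistrib Y' Y P' P) {I : Set Ω'} (hI : ∀ᵐ ω ∂P', ω ∈ I)
    (hXY : MonovaryOn X' Y' I) :
    ∫⁻ ω, ENNReal.ofReal ((X' ω - Y' ω) ^ 2) ∂P' ≤ ∫⁻ ω, ENNReal.ofReal ((X ω - Y ω) ^ 2) ∂P := by
  rw [lintegral_ofReal_sub_sq_eq hX.aemeasurable_fst hY.aemeasurable_fst,
    lintegral_ofReal_sub_sq_eq hX.aemeasurable_snd hY.aemeasurable_snd]
  gcongr
  · exact lintegral_volume_triangle_le_of_monovaryOn hX hY hI hXY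
  · exact lintegral_volume_triangle_le_of_monovaryOn hY hX hI hXY.symm

end RearrangementInequality

section UniformLaw

/-- The uniform law on `[0, 1]`, the parameter space of quantile functions and of ranks. -/
def uniform01 : Measure ℝ := volume.restrict (Set.Icc 0 1)

instance isProbabilityMeasure_uniform01 : IsProbabilityMeasure uniform01 := ⟨by simp [uniform01]⟩

instance nullSingletonClass_uniform01 : NullSingletonClass uniform01 :=
  inferInstanceAs (NullSingletonClass (volume.restrict _))

lemma uniform01_eq_restrict_Ioo : uniform01 = volume.restrict (Set.Ioo 0 1) :=
  (Measure.restrict_congr_set Ioo_ae_eq_Icc).symm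

lemma ae_uniform01_mem_Ioo : ∀ᵐ u ∂uniform01, u ∈ Set.Ioo (0 : ℝ) 1 := by
  rw [uniform01_eq_restrict_Ioo]
  exact ae_restrict_mem measurableSet_Ioo

lemma uniform01_Iic {x : ℝ} (hx : x ≤ 1) : uniform01 (Set.Iic x) = ENNReal.ofReal x := by
  have inter_eq : Set.Iic x ∩ Set.Icc 0 1 = Set.Icc 0 x := by
    ext t
    exact ⟨fun ⟨htx, ht0, _⟩ => ⟨ht0, htx⟩, fun ⟨ht0, htx⟩ => ⟨htx, ht0, htx.trans hx⟩⟩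
  rw [uniform01, Measure.restrict_apply measurableSet_Iic, inter_eq, Real.volume_Icc, sub_zero]

variable {f : ℝ → ℝ}

lemma aemeasurable_uniform01_of_monotoneOn (hf : MonotoneOn f (Set.Ioo 0 1)) :
    AEMeasurable f uniform01 := by
  rw [uniform01_eq_restrict_Ioo]
  exact aemeasurable_restrict_of_monotoneOn measurableSet_Ioo hf

lemma cdf_map_uniform01 (hf : StrictMonoOn f (Set.Ioo 0 1)) {u : ℝ} (hu : u ∈ Set.Ioo (0 : ℝ) 1) :
    cdf (uniform01.map f) (f u) = u := by
  have hfm := aemeasurable_uniform01_of_monotoneOn hf.monotoneOn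
  have := Measure.isProbabilityMeasure_map hfm
  have preimage_eq : f ⁻¹' Set.Iic (f u) =ᵐ[uniform01] Set.Iic u := by
    filter_upwards [ae_uniform01_mem_Ioo] with v hv
    exact propext (hf.le_iff_le hv hu)
  rw [cdf_eq_real, measureReal_def, Measure.map_apply_of_aemeasurable hfm measurableSet_Iic,
    measure_congr preimage_eq, uniform01_Iic hu.2.le, ENNReal.toReal_ofReal hu.1.le]

lemma nullSingletonClass_map_uniform01 (hf : StrictMonoOn f (Set.Ioo 0 1)) :
    NullSingletonClass (uniform01.map f) := by
  refine ⟨fun s => ?_⟩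
  rw [Measure.map_apply_of_aemeasurable (aemeasurable_uniform01_of_monotoneOn hf.monotoneOn)
    (measurableSet_singleton s)]
  have hsub : (f ⁻¹' {s} ∩ Set.Ioo 0 1).Subsingleton := fun u hu v hv =>
    hf.injOn hu.2 hv.2 (hu.1.trans hv.1.symm)
  refine measure_mono_null_ae ?_ (hsub.measure_zero uniform01)
  filter_upwards [ae_uniform01_mem_Ioo] with u hu hus using ⟨hus, hu⟩

end UniformLaw

section MeasurePreserving

variable {α β : Type*} [MeasurableSpace α] [MeasurableSpace β] {m : Measure α} {f : α → β}
  {g : β → α}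

lemma measurePreserving_map_of_ae_leftInverse (hf : AEMeasurable f m) (hg : Measurable g)
    (hgf : ∀ᵐ a ∂m, g (f a) = a) : MeasurePreserving g (m.map f) m :=
  ⟨hg, by
    rw [AEMeasurable.map_map_of_aemeasurable hg.aemeasurable hf]
    exact (Measure.map_congr hgf).trans Measure.map_id⟩

lemma ae_map_rightInverse_of_ae_leftInverse [MeasurableEq β] (hf : AEMeasurable f m)
    (hg : Measurable g) (hgf : ∀ᵐ a ∂m, g (f a) = a) : ∀ᵐ b ∂m.map f, f (g b) = b := by
  have hfg : AEMeasurable (fun b => f (g b)) (m.map f) := hf.comp_quasiMeasurePreserving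
    (measurePreserving_map_of_ae_leftInverse hf hg hgf).quasiMeasurePreserving
  have hmeas := nullMeasurableSet_eq_fun hfg aemeasurable_id
  refine (Measure.map_apply₀ hf hmeas.compl).trans (ae_iff.1 ?_)
  filter_upwards [hgf] with a ha
  simp [ha]

lemma integral_comp_of_measurePreserving {E : Type*} [NormedAddCommGroup E] [NormedSpace ℝ E]
    {m' : Measure β} {φ : β → E} (hf : MeasurePreserving f m m')
    (hφ : AEStronglyMeasurable φ m') : ∫ a, φ (f a) ∂m = ∫ b, φ b ∂m' := by
  rw [← hf.map_eq] at hφ ⊢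
  exact (integral_map hf.aemeasurable hφ).symm

end MeasurePreserving

section Quantile

variable (ν : Measure ℝ) [IsProbabilityMeasure ν] {u : ℝ}

lemma quantile_eq_sInf_cdf : quantile ν u = sInf {s | u ≤ cdf ν s} := by
  simp only [quantile, ← ofReal_cdf, ENNReal.ofReal_le_ofReal_iff (cdf_nonneg ν _)]

lemma quantile_le_iff (hu : u ∈ Set.Ioo (0 : ℝ) 1) {s : ℝ} :
    quantile ν u ≤ s ↔ u ≤ cdf ν s := by
  rw [quantile_eq_sInf_cdf]
  have hne : {s | u ≤ cdf ν s}.Nonempty :=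
    ((tendsto_cdf_atTop ν).eventually (lt_mem_nhds hu.2)).exists.imp fun _ => le_of_lt
  have hbdd : BddBelow {s | u ≤ cdf ν s} := by
    obtain ⟨s, hs⟩ := ((tendsto_cdf_atBot ν).eventually (gt_mem_nhds hu.1)).exists
    exact ⟨s, fun t ht => le_of_lt ((monotone_cdf ν).reflect_lt (hs.trans_le ht))⟩
  refine ⟨fun h => ?_, fun h => csInf_le hbdd h⟩
  have hcont : Tendsto (cdf ν) (𝓝[>] s) (𝓝 (cdf ν s)) :=
    ((cdf ν).right_continuous s).mono Set.Ioi_subset_Ici_self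
  refine ge_of_tendsto hcont ?_
  filter_upwards [self_mem_nhdsWithin] with t ht
  obtain ⟨r, hr, hrt⟩ := exists_lt_of_csInf_lt hne (h.trans_lt ht)
  exact le_trans hr (monotone_cdf ν hrt.le)

lemma monotoneOn_quantile : MonotoneOn (quantile ν) (Set.Ioo 0 1) := fun _ hu _ hv huv =>
  (quantile_le_iff ν hu).2 (huv.trans ((quantile_le_iff ν hv).1 le_rfl))

lemma aemeasurable_quantile : AEMeasurable (quantile ν) uniform01 :=
  aemeasurable_uniform01_of_monotoneOn (monotoneOn_quantile ν)

lemma map_quantile_uniform01 : uniform01.map (quantile ν) = ν := by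
  have := Measure.isProbabilityMeasure_map (aemeasurable_quantile ν)
  refine Measure.ext_of_Iic _ _ fun s => ?_
  have preimage_eq : quantile ν ⁻¹' Set.Iic s =ᵐ[uniform01] Set.Iic (cdf ν s) := by
    filter_upwards [ae_uniform01_mem_Ioo] with u hu
    exact propext (quantile_le_iff ν hu)
  rw [Measure.map_apply_of_aemeasurable (aemeasurable_quantile ν) measurableSet_Iic,
    measure_congr preimage_eq, uniform01_Iic (cdf_le_one ν s), ofReal_cdf]

variable [NullSingletonClass ν]

lemma cdf_quantile (hu : u ∈ Set.Ioo (0 : ℝ) 1) : cdf ν (quantile ν u) = u := by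
  refine le_antisymm ?_ ((quantile_le_iff ν hu).1 le_rfl)
  rw [← ENNReal.ofReal_le_ofReal_iff hu.1.le]
  calc ENNReal.ofReal (cdf ν (quantile ν u))
      = ν (Set.Iio (quantile ν u)) := by rw [ofReal_cdf, measure_congr Iio_ae_eq_Iic]
    _ = uniform01 (quantile ν ⁻¹' Set.Iio (quantile ν u)) := by
        rw [← Measure.map_apply_of_aemeasurable (aemeasurable_quantile ν) measurableSet_Iio,
          map_quantile_uniform01]
    _ ≤ uniform01 (Set.Iic u) := by
        refine measure_mono_ae ?_
        filter_upwards [ae_uniform01_mem_Ioo] with v hv hvu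
        exact ((monotoneOn_quantile ν).reflect_lt hv hu hvu).le
    _ = ENNReal.ofReal u := uniform01_Iic hu.2.le

lemma strictMonoOn_quantile : StrictMonoOn (quantile ν) (Set.Ioo 0 1) :=
  (monotoneOn_quantile ν).strictMonoOn_of_injOn fun u hu v hv huv => by
    rw [← cdf_quantile ν hu, huv, cdf_quantile ν hv]

lemma ae_cdf_quantile : ∀ᵐ u ∂uniform01, cdf ν (quantile ν u) = u :=
  ae_uniform01_mem_Ioo.mono fun _ hu => cdf_quantile ν hu

lemma measurePreserving_cdf : MeasurePreserving (cdf ν) ν uniform01 := by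
  simpa only [map_quantile_uniform01] using measurePreserving_map_of_ae_leftInverse
    (aemeasurable_quantile ν) (monotone_cdf ν).measurable (ae_cdf_quantile ν)

lemma ae_quantile_cdf : ∀ᵐ s ∂ν, quantile ν (cdf ν s) = s := by
  simpa only [map_quantile_uniform01] using ae_map_rightInverse_of_ae_leftInverse
    (aemeasurable_quantile ν) (monotone_cdf ν).measurable (ae_cdf_quantile ν)

lemma quantile_map_uniform01 {f : ℝ → ℝ} (hf : StrictMonoOn f (Set.Ioo 0 1)) :
    quantile (uniform01.map f) =ᵐ[uniform01] f := by
  have hfm := aemeasurable_uniform01_of_monotoneOn hf.monotoneOn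
  have := Measure.isProbabilityMeasure_map hfm
  have := nullSingletonClass_map_uniform01 hf
  filter_upwards [ae_of_ae_map hfm (ae_quantile_cdf _), ae_uniform01_mem_Ioo] with u hq hu
  rwa [cdf_map_uniform01 hf hu] at hq

end Quantile

section Couplings

variable {A E F T Ω : Type*} [MeasurableSpace A] [MeasurableSpace E] [MeasurableSpace F]
  [MeasurableSpace T] [MeasurableSpace Ω]

lemma exists_map_eq_and_map_eq_of_map_fst_eq [StandardBorelSpace E] [Nonempty E]
    [StandardBorelSpace F] [Nonempty F] (α : Measure (A × E)) (β : Measure (A × F))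
    [IsFiniteMeasure α] [IsFiniteMeasure β] (h : α.map Prod.fst = β.map Prod.fst) :
    ∃ γ : Measure (A × E × F),
      γ.map (fun p => (p.1, p.2.1)) = α ∧ γ.map (fun p => (p.1, p.2.2)) = β := by
  refine ⟨α.fst ⊗ₘ (α.condKernel ×ₖ β.condKernel), ?_, ?_⟩
  · calc (α.fst ⊗ₘ (α.condKernel ×ₖ β.condKernel)).map (Prod.map id Prod.fst)
        = α.fst ⊗ₘ (α.condKernel ×ₖ β.condKernel).fst := by
          rw [Kernel.fst_eq, Measure.compProd_map measurable_fst]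
      _ = α := by rw [Kernel.fst_prod, α.disintegrate]
  · calc (α.fst ⊗ₘ (α.condKernel ×ₖ β.condKernel)).map (Prod.map id Prod.snd)
        = α.fst ⊗ₘ (α.condKernel ×ₖ β.condKernel).snd := by
          rw [Kernel.snd_eq, Measure.compProd_map measurable_snd]
      _ = β := by rw [Kernel.snd_prod, show α.fst = β.fst from h, β.disintegrate]

variable {μ : Measure E} {ν : Measure F}

lemma map_prodMk_mem_Coupling_iff [IsProbabilityMeasure μ] {P : Measure Ω} {X : Ω → E} {Y : Ω → F}
    (hX : Measurable X) (hY : Measurable Y) :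
    P.map (fun ω => (X ω, Y ω)) ∈ Coupling μ ν ↔
      MeasurePreserving X P μ ∧ MeasurePreserving Y P ν := by
  have hXY := hX.prodMk hY
  have map_fst : (P.map fun ω => (X ω, Y ω)).map Prod.fst = P.map X :=
    Measure.map_map measurable_fst hXY
  have map_snd : (P.map fun ω => (X ω, Y ω)).map Prod.snd = P.map Y :=
    Measure.map_map measurable_snd hXY
  constructor
  · rintro ⟨-, hμ, hν⟩
    exact ⟨⟨hX, map_fst ▸ hμ⟩, ⟨hY, map_snd ▸ hν⟩⟩
  · rintro ⟨hμ, hν⟩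
    have : IsProbabilityMeasure (P.map X) := hμ.map_eq ▸ inferInstance
    have := Measure.isProbabilityMeasure_of_map (μ := P) X
    exact ⟨Measure.isProbabilityMeasure_map hXY.aemeasurable, map_fst.trans hμ.map_eq,
      map_snd.trans hν.map_eq⟩

lemma measurePreserving_fst_of_mem_Coupling {π : Measure (E × F)} (hπ : π ∈ Coupling μ ν) :
    MeasurePreserving Prod.fst π μ :=
  ⟨measurable_fst, hπ.2.1⟩

lemma measurePreserving_snd_of_mem_Coupling {π : Measure (E × F)} (hπ : π ∈ Coupling μ ν) :
    MeasurePreserving Prod.snd π ν :=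
  ⟨measurable_snd, hπ.2.2⟩

lemma exists_mem_Coupling_ae_eq [StandardBorelSpace E] [StandardBorelSpace F] [MeasurableEq T]
    [IsProbabilityMeasure μ] [IsProbabilityMeasure ν] {f : E → T} {g : F → T}
    (hf : Measurable f) (hg : Measurable g) (h : μ.map f = ν.map g) :
    ∃ π ∈ Coupling μ ν, ∀ᵐ p ∂π, f p.1 = g p.2 := by
  have := nonempty_of_isProbabilityMeasure μ
  have := nonempty_of_isProbabilityMeasure ν
  have hfid : Measurable fun x => (f x, x) := hf.prodMk measurable_id
  have hgid : Measurable fun y => (g y, y) := hg.prodMk measurable_id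
  obtain ⟨γ, hα, hβ⟩ := exists_map_eq_and_map_eq_of_map_fst_eq (μ.map fun x => (f x, x))
    (ν.map fun y => (g y, y))
    (by rwa [Measure.map_map measurable_fst hfid, Measure.map_map measurable_fst hgid])
  have hγα : MeasurePreserving (fun p : T × E × F => (p.1, p.2.1)) γ _ := ⟨by fun_prop, hα⟩
  have hγβ : MeasurePreserving (fun p : T × E × F => (p.1, p.2.2)) γ _ := ⟨by fun_prop, hβ⟩
  have hαμ : MeasurePreserving Prod.snd (μ.map fun x => (f x, x)) μ :=
    ⟨measurable_snd, (Measure.map_map measurable_snd hfid).trans Measure.map_id⟩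
  have hβν : MeasurePreserving Prod.snd (ν.map fun y => (g y, y)) ν :=
    ⟨measurable_snd, (Measure.map_map measurable_snd hgid).trans Measure.map_id⟩
  have hγf : ∀ᵐ p ∂γ, p.1 = f p.2.1 := hγα.quasiMeasurePreserving.ae <|
    (ae_map_iff hfid.aemeasurable
      (measurableSet_eq_fun measurable_fst (hf.comp measurable_snd))).2 (.of_forall fun _ => rfl)
  have hγg : ∀ᵐ p ∂γ, p.1 = g p.2.2 := hγβ.quasiMeasurePreserving.ae <|
    (ae_map_iff hgid.aemeasurable
      (measurableSet_eq_fun measurable_fst (hg.comp measurable_snd))).2 (.of_forall fun _ => rfl)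
  have hfst : MeasurePreserving (fun p : T × E × F => p.2.1) γ μ := hαμ.comp hγα
  have hsnd : MeasurePreserving (fun p : T × E × F => p.2.2) γ ν := hβν.comp hγβ
  refine ⟨γ.map fun p => (p.2.1, p.2.2),
    (map_prodMk_mem_Coupling_iff hfst.measurable hsnd.measurable).2 ⟨hfst, hsnd⟩, ?_⟩
  refine (ae_map_iff (by fun_prop)
    (measurableSet_eq_fun (hf.comp measurable_fst) (hg.comp measurable_snd))).2 ?_
  filter_upwards [hγf, hγg] with p hpf hpg using hpf.symm.trans hpg

end Couplings

section Ranks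

variable {d : ℕ} {θ : Euc d} {μ μ1 μ2 μ3 ν : Measure (Euc d)}

lemma measurePreserving_inner_projLine (θ : Euc d) (μ : Measure (Euc d)) :
    MeasurePreserving (fun x => ⟪θ, x⟫) μ (projLine θ μ) :=
  ⟨by fun_prop, rfl⟩

instance isProbabilityMeasure_projLine [IsProbabilityMeasure μ] :
    IsProbabilityMeasure (projLine θ μ) :=
  Measure.isProbabilityMeasure_map (measurePreserving_inner_projLine θ μ).aemeasurable

/-- The rank of `x` among `μ` in direction `θ`: the `μ`-mass of the half-space of the points whose
projection on `θ` is at most that of `x`. -/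
def rank (θ : Euc d) (μ : Measure (Euc d)) (x : Euc d) : ℝ :=
  cdf (projLine θ μ) ⟪θ, x⟫

lemma measurable_rank (θ : Euc d) (μ : Measure (Euc d)) : Measurable (rank θ μ) :=
  (monotone_cdf _).measurable.comp (measurePreserving_inner_projLine θ μ).measurable

lemma measurePreserving_rank [IsProbabilityMeasure μ] [NullSingletonClass (projLine θ μ)] :
    MeasurePreserving (rank θ μ) μ uniform01 :=
  (measurePreserving_cdf _).comp (measurePreserving_inner_projLine θ μ)

lemma measurePreserving_rank_fst_of_mem_Coupling [IsProbabilityMeasure μ]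
    [NullSingletonClass (projLine θ μ)] {π : Measure (Euc d × Euc d)} (hπ : π ∈ Coupling μ ν) :
    MeasurePreserving (fun p => rank θ μ p.1) π uniform01 :=
  measurePreserving_rank.comp (measurePreserving_fst_of_mem_Coupling hπ)

lemma measurePreserving_rank_snd_of_mem_Coupling [IsProbabilityMeasure ν]
    [NullSingletonClass (projLine θ ν)] {π : Measure (Euc d × Euc d)} (hπ : π ∈ Coupling μ ν) :
    MeasurePreserving (fun p => rank θ ν p.2) π uniform01 :=
  measurePreserving_rank.comp (measurePreserving_snd_of_mem_Coupling hπ)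

lemma ae_quantile_rank [IsProbabilityMeasure μ] [NullSingletonClass (projLine θ μ)] :
    ∀ᵐ x ∂μ, quantile (projLine θ μ) (rank θ μ x) = ⟪θ, x⟫ :=
  (measurePreserving_inner_projLine θ μ).quasiMeasurePreserving.ae (ae_quantile_cdf _)

variable [IsProbabilityMeasure μ1] [IsProbabilityMeasure μ2] [NullSingletonClass (projLine θ μ1)]
  [NullSingletonClass (projLine θ μ2)]

lemma ae_piTheta_cdf_eq : ∀ᵐ p ∂piTheta θ μ1 μ2,
    cdf (projLine θ μ1) p.1 = cdf (projLine θ μ2) p.2 := by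
  have hq := (aemeasurable_quantile (projLine θ μ1)).prodMk (aemeasurable_quantile (projLine θ μ2))
  refine (ae_map_iff hq (measurableSet_eq_fun
    ((monotone_cdf _).measurable.comp measurable_fst)
    ((monotone_cdf _).measurable.comp measurable_snd))).2 ?_
  filter_upwards [ae_cdf_quantile (projLine θ μ1), ae_cdf_quantile (projLine θ μ2)] with u h1 h2
  exact h1.trans h2.symm

lemma mem_OmegaTheta_iff {ω : Measure (Euc d × Euc d)} :
    ω ∈ OmegaTheta θ μ1 μ2 ↔
      ω ∈ Coupling μ1 μ2 ∧ ∀ᵐ p ∂ω, rank θ μ1 p.1 = rank θ μ2 p.2 := by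
  refine and_congr_right fun hω => ⟨fun hproj => ?_, fun hrank => ?_⟩
  · exact ae_of_ae_map (f := fun p : Euc d × Euc d => (⟪θ, p.1⟫, ⟪θ, p.2⟫)) (by fun_prop)
      (hproj ▸ ae_piTheta_cdf_eq)
  · have hfst := measurePreserving_fst_of_mem_Coupling hω
    have hsnd := measurePreserving_snd_of_mem_Coupling hω
    have hrankfst := measurePreserving_rank_fst_of_mem_Coupling (θ := θ) hω
    have hq := (aemeasurable_quantile (projLine θ μ1)).prodMk
      (aemeasurable_quantile (projLine θ μ2))
    calc ω.map (fun p => (⟪θ, p.1⟫, ⟪θ, p.2⟫))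
        = ω.map ((fun u => (quantile (projLine θ μ1) u, quantile (projLine θ μ2) u)) ∘
            fun p => rank θ μ1 p.1) := by
          refine Measure.map_congr ?_
          filter_upwards [hfst.quasiMeasurePreserving.ae (ae_quantile_rank (θ := θ)),
            hsnd.quasiMeasurePreserving.ae (ae_quantile_rank (θ := θ)), hrank] with p hp1 hp2 hp
          rw [Function.comp_apply, ← hp1, ← hp2, hp]
      _ = piTheta θ μ1 μ2 := by
          rw [← AEMeasurable.map_map_of_aemeasurable (hrankfst.map_eq ▸ hq)
            hrankfst.aemeasurable, hrankfst.map_eq]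
          rfl

lemma map_prodMk_mem_OmegaTheta_iff {Ω : Type*} [MeasurableSpace Ω] {P : Measure Ω}
    {X Y : Ω → Euc d} (hX : Measurable X) (hY : Measurable Y) :
    P.map (fun ω => (X ω, Y ω)) ∈ OmegaTheta θ μ1 μ2 ↔ MeasurePreserving X P μ1 ∧
      MeasurePreserving Y P μ2 ∧ ∀ᵐ ω ∂P, rank θ μ1 (X ω) = rank θ μ2 (Y ω) := by
  have hmeas : MeasurableSet {p : Euc d × Euc d | rank θ μ1 p.1 = rank θ μ2 p.2} :=
    measurableSet_eq_fun ((measurable_rank θ μ1).comp measurable_fst)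
      ((measurable_rank θ μ2).comp measurable_snd)
  rw [mem_OmegaTheta_iff, map_prodMk_mem_Coupling_iff hX hY,
    ae_map_iff (hX.prodMk hY).aemeasurable hmeas, and_assoc]

lemma OmegaTheta_nonempty : (OmegaTheta θ μ1 μ2).Nonempty := by
  obtain ⟨ω, hω, hrank⟩ := exists_mem_Coupling_ae_eq (measurable_rank θ μ1) (measurable_rank θ μ2)
    (measurePreserving_rank.map_eq.trans measurePreserving_rank.map_eq.symm)
  exact ⟨ω, mem_OmegaTheta_iff.2 ⟨hω, hrank⟩⟩

lemma map_swap_mem_OmegaTheta {ω : Measure (Euc d × Euc d)} (hω : ω ∈ OmegaTheta θ μ1 μ2) :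
    ω.map Prod.swap ∈ OmegaTheta θ μ2 μ1 := by
  obtain ⟨hcoupling, hrank⟩ := mem_OmegaTheta_iff.1 hω
  exact (map_prodMk_mem_OmegaTheta_iff measurable_snd measurable_fst).2
    ⟨measurePreserving_snd_of_mem_Coupling hcoupling,
      measurePreserving_fst_of_mem_Coupling hcoupling, hrank.mono fun _ => Eq.symm⟩

lemma map_diag_mem_OmegaTheta : μ1.map (fun x => (x, x)) ∈ OmegaTheta θ μ1 μ1 :=
  (map_prodMk_mem_OmegaTheta_iff measurable_id measurable_id).2
    ⟨.id _, .id _, .of_forall fun _ => rfl⟩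

lemma OmegaTheta_trans [IsProbabilityMeasure ν] [NullSingletonClass (projLine θ ν)] {Ω : Type*}
    [MeasurableSpace Ω] {P : Measure Ω} {X Y Z : Ω → Euc d} (hX : Measurable X)
    (hY : Measurable Y) (hZ : Measurable Z)
    (hXY : P.map (fun ω => (X ω, Y ω)) ∈ OmegaTheta θ ν μ1)
    (hXZ : P.map (fun ω => (X ω, Z ω)) ∈ OmegaTheta θ ν μ2) :
    P.map (fun ω => (Y ω, Z ω)) ∈ OmegaTheta θ μ1 μ2 := by
  obtain ⟨-, hY1, hrank1⟩ := (map_prodMk_mem_OmegaTheta_iff hX hY).1 hXY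
  obtain ⟨-, hZ2, hrank2⟩ := (map_prodMk_mem_OmegaTheta_iff hX hZ).1 hXZ
  refine (map_prodMk_mem_OmegaTheta_iff hY hZ).2 ⟨hY1, hZ2, ?_⟩
  filter_upwards [hrank1, hrank2] with ω h1 h2 using h1.symm.trans h2

end Ranks

section SecondMoments

lemma memLp_id_of_mem_P2 {E : Type*} [NormedAddCommGroup E] [MeasurableSpace E]
    [OpensMeasurableSpace E] [SecondCountableTopology E] {μ : Measure E} (hμ : μ ∈ P2) :
    MemLp id 2 μ :=
  (memLp_two_iff_integrable_sq_norm aestronglyMeasurable_id).2 hμ.2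

lemma memLp_quantile {ν : Measure ℝ} [IsProbabilityMeasure ν] (hν : MemLp id 2 ν) :
    MemLp (quantile ν) 2 uniform01 := by
  rw [← map_quantile_uniform01 ν] at hν
  exact (memLp_map_measure_iff aestronglyMeasurable_id (aemeasurable_quantile ν)).1 hν

variable {d : ℕ} {θ : Euc d} {μ : Measure (Euc d)}

lemma memLp_inner_of_mem_P2 (hμ : μ ∈ P2) : MemLp (fun x => ⟪θ, x⟫) 2 μ :=
  (memLp_id_of_mem_P2 hμ).const_inner θ

lemma memLp_quantile_projLine [IsProbabilityMeasure μ] (hμ : μ ∈ P2) :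
    MemLp (quantile (projLine θ μ)) 2 uniform01 :=
  memLp_quantile <| (memLp_map_measure_iff aestronglyMeasurable_id
    (measurePreserving_inner_projLine θ μ).aemeasurable).2 (memLp_inner_of_mem_P2 hμ)

lemma integrable_norm_sq_sub_inner_sq (hμ : μ ∈ P2) :
    Integrable (fun x => ‖x‖ ^ 2 - ⟪θ, x⟫ ^ 2) μ :=
  hμ.2.sub (memLp_inner_of_mem_P2 hμ).integrable_sq

end SecondMoments

section MonotoneRearrangement

variable {Ω : Type*} [MeasurableSpace Ω] {P : Measure Ω} {U V : Ω → ℝ} {f g : ℝ → ℝ}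

lemma memLp_comp_sub_comp (hf : MemLp f 2 uniform01) (hg : MemLp g 2 uniform01)
    (hU : MeasurePreserving U P uniform01) (hV : MeasurePreserving V P uniform01) :
    MemLp (fun ω => f (U ω) - g (V ω)) 2 P :=
  (hf.comp_measurePreserving hU).sub (hg.comp_measurePreserving hV)

lemma integral_sub_sq_le_integral_comp_sub_comp_sq [SFinite P] (hf : MonotoneOn f (Set.Ioo 0 1))
    (hg : MonotoneOn g (Set.Ioo 0 1)) (hfL : MemLp f 2 uniform01) (hgL : MemLp g 2 uniform01)
    (hU : MeasurePreserving U P uniform01) (hV : MeasurePreserving V P uniform01) :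
    ∫ u, (f u - g u) ^ 2 ∂uniform01 ≤ ∫ ω, (f (U ω) - g (V ω)) ^ 2 ∂P := by
  have hfm := aemeasurable_uniform01_of_monotoneOn hf
  have hgm := aemeasurable_uniform01_of_monotoneOn hg
  have identDistrib_comp {φ : ℝ → ℝ} {W : Ω → ℝ} (hφ : AEMeasurable φ uniform01)
      (hW : MeasurePreserving W P uniform01) : IdentDistrib φ (fun ω => φ (W ω)) uniform01 P := by
    refine ⟨hφ, hφ.comp_quasiMeasurePreserving hW.quasiMeasurePreserving, ?_⟩
    rw [← hW.map_eq] at hφ ⊢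
    exact AEMeasurable.map_map_of_aemeasurable hφ hW.aemeasurable
  have hmono : MonovaryOn f g (Set.Ioo 0 1) := hf.monovaryOn hg
  have hle := lintegral_ofReal_sub_sq_le_of_monovaryOn (identDistrib_comp hfm hU)
    (identDistrib_comp hgm hV) ae_uniform01_mem_Ioo hmono
  have hint : Integrable (fun u => (f u - g u) ^ 2) uniform01 := (hfL.sub hgL).integrable_sq
  rw [← ofReal_integral_eq_lintegral_ofReal hint (.of_forall fun _ => sq_nonneg _),
    ← ofReal_integral_eq_lintegral_ofReal (memLp_comp_sub_comp hfL hgL hU hV).integrable_sq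
      (.of_forall fun _ => sq_nonneg _)] at hle
  exact (ENNReal.ofReal_le_ofReal_iff (integral_nonneg fun _ => sq_nonneg _)).1 hle

end MonotoneRearrangement

section Pivot

variable {d : ℕ} {θ : Euc d} {μ1 μ2 : Measure (Euc d)}

/-- The quantile function of the pivot `pivotMiddle θ μ1 μ2` on the line `ℝ θ`. -/
def pivotQuantile (θ : Euc d) (μ1 μ2 : Measure (Euc d)) (u : ℝ) : ℝ :=
  (1 / 2) * quantile (projLine θ μ1) u + (1 / 2) * quantile (projLine θ μ2) u

lemma pivotMiddle_eq_map_uniform01 :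
    pivotMiddle θ μ1 μ2 = uniform01.map fun u => pivotQuantile θ μ1 μ2 u • θ :=
  rfl

lemma pivotMiddle_comm : pivotMiddle θ μ1 μ2 = pivotMiddle θ μ2 μ1 := by
  simp only [pivotMiddle, add_comm]

variable [IsProbabilityMeasure μ1] [IsProbabilityMeasure μ2]

lemma aemeasurable_pivotQuantile : AEMeasurable (pivotQuantile θ μ1 μ2) uniform01 :=
  ((aemeasurable_quantile _).const_mul _).add ((aemeasurable_quantile _).const_mul _)

instance isProbabilityMeasure_pivotMiddle : IsProbabilityMeasure (pivotMiddle θ μ1 μ2) := by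
  rw [pivotMiddle_eq_map_uniform01]
  exact Measure.isProbabilityMeasure_map (aemeasurable_pivotQuantile.smul_const θ)

lemma projLine_pivotMiddle (hθ : ‖θ‖ = 1) :
    projLine θ (pivotMiddle θ μ1 μ2) = uniform01.map (pivotQuantile θ μ1 μ2) := by
  rw [projLine, pivotMiddle_eq_map_uniform01, AEMeasurable.map_map_of_aemeasurable (by fun_prop)
    (aemeasurable_pivotQuantile.smul_const θ)]
  simp [Function.comp_def, real_inner_smul_right, hθ]

variable [NullSingletonClass (projLine θ μ1)] [NullSingletonClass (projLine θ μ2)]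

lemma strictMonoOn_pivotQuantile : StrictMonoOn (pivotQuantile θ μ1 μ2) (Set.Ioo 0 1) := by
  intro u hu v hv huv
  have h1 := strictMonoOn_quantile (projLine θ μ1) hu hv huv
  have h2 := strictMonoOn_quantile (projLine θ μ2) hu hv huv
  unfold pivotQuantile
  gcongr

lemma nullSingletonClass_projLine_pivotMiddle (hθ : ‖θ‖ = 1) :
    NullSingletonClass (projLine θ (pivotMiddle θ μ1 μ2)) := by
  rw [projLine_pivotMiddle hθ]
  exact nullSingletonClass_map_uniform01 strictMonoOn_pivotQuantile

lemma ae_eq_pivotQuantile_rank_smul (hθ : ‖θ‖ = 1) : ∀ᵐ y ∂pivotMiddle θ μ1 μ2,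
    y = pivotQuantile θ μ1 μ2 (rank θ (pivotMiddle θ μ1 μ2) y) • θ := by
  have := nullSingletonClass_projLine_pivotMiddle (μ1 := μ1) (μ2 := μ2) hθ
  have hquantile : quantile (projLine θ (pivotMiddle θ μ1 μ2)) =ᵐ[uniform01]
      pivotQuantile θ μ1 μ2 := by
    rw [projLine_pivotMiddle hθ]
    exact quantile_map_uniform01 strictMonoOn_pivotQuantile
  have hline : ∀ᵐ y ∂pivotMiddle θ μ1 μ2, y = ⟪θ, y⟫ • θ := by
    refine (ae_map_iff (aemeasurable_pivotQuantile.smul_const θ)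
      (measurableSet_eq_fun measurable_id (by fun_prop))).2 (.of_forall fun u => ?_)
    simp [real_inner_smul_right, hθ]
  filter_upwards [hline, ae_quantile_rank (θ := θ),
    (measurePreserving_rank (θ := θ)).quasiMeasurePreserving.ae hquantile] with y hy hrank hq
  rwa [← hq, hrank]

/-- The transport cost `W₂²` between the pivot and `μ1`: a quarter of the squared distance between
the projections of `μ1` and `μ2`, plus the part of the second moment of `μ1` orthogonal to `θ`. -/
def pivotTransportCost (θ : Euc d) (μ1 μ2 : Measure (Euc d)) : ℝ :=
  (1 / 4) * ∫ u, (quantile (projLine θ μ2) u - quantile (projLine θ μ1) u) ^ 2 ∂uniform01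
    + ∫ x, (‖x‖ ^ 2 - ⟪θ, x⟫ ^ 2) ∂μ1

lemma norm_midpoint_smul_sub_sq (hθ : ‖θ‖ = 1) (a b s : ℝ) {x : Euc d} (hs : s = ⟪θ, x⟫) :
    ‖((1 / 2) * a + (1 / 2) * b) • θ - x‖ ^ 2 =
      (1 / 2) * (a - s) ^ 2 + (1 / 2) * (b - s) ^ 2 - (1 / 4) * (b - a) ^ 2
        + (‖x‖ ^ 2 - ⟪θ, x⟫ ^ 2) := by
  rw [norm_sub_sq_real, norm_smul, hθ, mul_one, Real.norm_eq_abs, sq_abs, real_inner_smul_left,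
    ← hs]
  ring

variable {π : Measure (Euc d × Euc d)}

lemma tCost_eq_pivotTransportCost_add (hθ : ‖θ‖ = 1) (h1 : μ1 ∈ P2) (h2 : μ2 ∈ P2)
    (hπ : π ∈ Coupling (pivotMiddle θ μ1 μ2) μ1) :
    tCost π = pivotTransportCost θ μ1 μ2
      + (1 / 2) * ∫ p, (quantile (projLine θ μ1) (rank θ (pivotMiddle θ μ1 μ2) p.1)
          - quantile (projLine θ μ1) (rank θ μ1 p.2)) ^ 2 ∂π
      + (1 / 2) * (∫ p, (quantile (projLine θ μ2) (rank θ (pivotMiddle θ μ1 μ2) p.1)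
          - quantile (projLine θ μ1) (rank θ μ1 p.2)) ^ 2 ∂π
        - ∫ u, (quantile (projLine θ μ2) u - quantile (projLine θ μ1) u) ^ 2 ∂uniform01) := by
  have := nullSingletonClass_projLine_pivotMiddle (μ1 := μ1) (μ2 := μ2) hθ
  set ν := pivotMiddle θ μ1 μ2
  set q1 := quantile (projLine θ μ1)
  set q2 := quantile (projLine θ μ2)
  have hfst := measurePreserving_fst_of_mem_Coupling hπ
  have hsnd := measurePreserving_snd_of_mem_Coupling hπ
  have hV := measurePreserving_rank_fst_of_mem_Coupling (θ := θ) hπ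
  have hU := measurePreserving_rank_snd_of_mem_Coupling (θ := θ) hπ
  have hq1 : MemLp q1 2 uniform01 := memLp_quantile_projLine h1
  have hq2 : MemLp q2 2 uniform01 := memLp_quantile_projLine h2
  have hR := integrable_norm_sq_sub_inner_sq (θ := θ) h1
  have hD : MemLp (fun u => q2 u - q1 u) 2 uniform01 := hq2.sub hq1
  have norm_sub_sq_eq : ∀ᵐ p ∂π, ‖p.1 - p.2‖ ^ 2 =
      (1 / 2) * (q1 (rank θ ν p.1) - q1 (rank θ μ1 p.2)) ^ 2
        + (1 / 2) * (q2 (rank θ ν p.1) - q1 (rank θ μ1 p.2)) ^ 2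
        - (1 / 4) * (q2 (rank θ ν p.1) - q1 (rank θ ν p.1)) ^ 2
        + (‖p.2‖ ^ 2 - ⟪θ, p.2⟫ ^ 2) := by
    filter_upwards [hfst.quasiMeasurePreserving.ae (ae_eq_pivotQuantile_rank_smul hθ),
      hsnd.quasiMeasurePreserving.ae (ae_quantile_rank (θ := θ))] with p hp1 hp2
    conv_lhs => rw [hp1]
    exact norm_midpoint_smul_sub_sq hθ _ _ _ hp2
  have hI1 := (memLp_comp_sub_comp hq1 hq1 hV hU).integrable_sq
  have hI2 := (memLp_comp_sub_comp hq2 hq1 hV hU).integrable_sq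
  have hI3 := (memLp_comp_sub_comp hq2 hq1 hV hV).integrable_sq
  have hI4 : Integrable (fun p => ‖p.2‖ ^ 2 - ⟪θ, p.2⟫ ^ 2) π :=
    hsnd.integrable_comp_of_integrable hR
  rw [tCost, integral_congr_ae norm_sub_sq_eq, integral_add (by fun_prop) hI4,
    integral_sub (by fun_prop) (by fun_prop), integral_add (by fun_prop) (by fun_prop),
    integral_const_mul, integral_const_mul, integral_const_mul,
    integral_comp_of_measurePreserving hV hD.integrable_sq.aestronglyMeasurable,
    integral_comp_of_measurePreserving hsnd hR.aestronglyMeasurable, pivotTransportCost]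
  ring

lemma pivotTransportCost_add_le_tCost (hθ : ‖θ‖ = 1) (h1 : μ1 ∈ P2) (h2 : μ2 ∈ P2)
    (hπ : π ∈ Coupling (pivotMiddle θ μ1 μ2) μ1) :
    pivotTransportCost θ μ1 μ2
      + (1 / 2) * ∫ p, (quantile (projLine θ μ1) (rank θ (pivotMiddle θ μ1 μ2) p.1)
          - quantile (projLine θ μ1) (rank θ μ1 p.2)) ^ 2 ∂π ≤ tCost π := by
  have := nullSingletonClass_projLine_pivotMiddle (μ1 := μ1) (μ2 := μ2) hθ
  have := hπ.1
  rw [tCost_eq_pivotTransportCost_add hθ h1 h2 hπ, le_add_iff_nonneg_right]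
  refine mul_nonneg one_half_pos.le (sub_nonneg.2 ?_)
  exact integral_sub_sq_le_integral_comp_sub_comp_sq (monotoneOn_quantile _)
    (monotoneOn_quantile _) (memLp_quantile_projLine h2) (memLp_quantile_projLine h1)
    (measurePreserving_rank_fst_of_mem_Coupling hπ) (measurePreserving_rank_snd_of_mem_Coupling hπ)

lemma pivotTransportCost_le_tCost (hθ : ‖θ‖ = 1) (h1 : μ1 ∈ P2) (h2 : μ2 ∈ P2)
    (hπ : π ∈ Coupling (pivotMiddle θ μ1 μ2) μ1) : pivotTransportCost θ μ1 μ2 ≤ tCost π :=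
  le_trans (le_add_of_nonneg_right (by positivity))
    (pivotTransportCost_add_le_tCost hθ h1 h2 hπ)

lemma tCost_of_mem_OmegaTheta_pivotMiddle (hθ : ‖θ‖ = 1) (h1 : μ1 ∈ P2) (h2 : μ2 ∈ P2)
    (hπ : π ∈ OmegaTheta θ (pivotMiddle θ μ1 μ2) μ1) : tCost π = pivotTransportCost θ μ1 μ2 := by
  have := nullSingletonClass_projLine_pivotMiddle (μ1 := μ1) (μ2 := μ2) hθ
  obtain ⟨hcoupling, hrank⟩ := mem_OmegaTheta_iff.1 hπ
  have hfst_eq_snd (q : ℝ → ℝ) :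
      ∫ p, (q (rank θ (pivotMiddle θ μ1 μ2) p.1)
        - quantile (projLine θ μ1) (rank θ μ1 p.2)) ^ 2 ∂π =
      ∫ p, (q (rank θ (pivotMiddle θ μ1 μ2) p.1)
        - quantile (projLine θ μ1) (rank θ (pivotMiddle θ μ1 μ2) p.1)) ^ 2 ∂π :=
    integral_congr_ae <| hrank.mono fun p hp => by simp only [hp]
  have hD : MemLp (fun u => quantile (projLine θ μ2) u - quantile (projLine θ μ1) u) 2 uniform01 :=
    (memLp_quantile_projLine h2).sub (memLp_quantile_projLine h1)
  rw [tCost_eq_pivotTransportCost_add hθ h1 h2 hcoupling, hfst_eq_snd, hfst_eq_snd,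
    ← integral_comp_of_measurePreserving (measurePreserving_rank_fst_of_mem_Coupling (θ := θ)
        hcoupling)
      hD.integrable_sq.aestronglyMeasurable]
  simp only [sub_self, zero_pow two_ne_zero, integral_zero, mul_zero, add_zero]

lemma W2sq_pivotMiddle (hθ : ‖θ‖ = 1) (h1 : μ1 ∈ P2) (h2 : μ2 ∈ P2) :
    W2sq (pivotMiddle θ μ1 μ2) μ1 = pivotTransportCost θ μ1 μ2 := by
  have := nullSingletonClass_projLine_pivotMiddle (μ1 := μ1) (μ2 := μ2) hθ
  obtain ⟨ω, hω⟩ := OmegaTheta_nonempty (θ := θ) (μ1 := pivotMiddle θ μ1 μ2) (μ2 := μ1)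
  refine IsLeast.csInf_eq ⟨⟨ω, hω.1, tCost_of_mem_OmegaTheta_pivotMiddle hθ h1 h2 hω⟩, ?_⟩
  rintro _ ⟨π, hπ, rfl⟩
  exact pivotTransportCost_le_tCost hθ h1 h2 hπ

lemma ae_rank_eq_of_tCost_le (hθ : ‖θ‖ = 1) (h1 : μ1 ∈ P2) (h2 : μ2 ∈ P2)
    (hπ : π ∈ Coupling (pivotMiddle θ μ1 μ2) μ1) (hle : tCost π ≤ pivotTransportCost θ μ1 μ2) :
    ∀ᵐ p ∂π, rank θ (pivotMiddle θ μ1 μ2) p.1 = rank θ μ1 p.2 := by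
  have := nullSingletonClass_projLine_pivotMiddle (μ1 := μ1) (μ2 := μ2) hθ
  have hV := measurePreserving_rank_fst_of_mem_Coupling (θ := θ) hπ
  have hU := measurePreserving_rank_snd_of_mem_Coupling (θ := θ) hπ
  have hq := memLp_quantile_projLine (θ := θ) h1
  have hzero : ∫ p, (quantile (projLine θ μ1) (rank θ (pivotMiddle θ μ1 μ2) p.1)
      - quantile (projLine θ μ1) (rank θ μ1 p.2)) ^ 2 ∂π = 0 :=
    le_antisymm (by linarith [pivotTransportCost_add_le_tCost hθ h1 h2 hπ])
      (integral_nonneg fun _ => sq_nonneg _)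
  rw [integral_eq_zero_iff_of_nonneg (fun _ => sq_nonneg _)
    (memLp_comp_sub_comp hq hq hV hU).integrable_sq] at hzero
  filter_upwards [hzero, hV.quasiMeasurePreserving.ae ae_uniform01_mem_Ioo,
    hU.quasiMeasurePreserving.ae ae_uniform01_mem_Ioo] with p hp hp1 hp2
  exact (strictMonoOn_quantile _).injOn hp1 hp2 (sub_eq_zero.1 (sq_eq_zero_iff.1 hp))

theorem OptPlan_pivotMiddle_left (hθ : ‖θ‖ = 1) (h1 : μ1 ∈ P2) (h2 : μ2 ∈ P2) :
    OptPlan (pivotMiddle θ μ1 μ2) μ1 = OmegaTheta θ (pivotMiddle θ μ1 μ2) μ1 := by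
  have := nullSingletonClass_projLine_pivotMiddle (μ1 := μ1) (μ2 := μ2) hθ
  ext π
  rw [OptPlan, W2sq_pivotMiddle hθ h1 h2]
  exact ⟨fun ⟨hπ, hcost⟩ =>
      mem_OmegaTheta_iff.2 ⟨hπ, ae_rank_eq_of_tCost_le hθ h1 h2 hπ hcost.le⟩,
    fun hπ => ⟨hπ.1, tCost_of_mem_OmegaTheta_pivotMiddle hθ h1 h2 hπ⟩⟩

theorem OptPlan_pivotMiddle_right (hθ : ‖θ‖ = 1) (h1 : μ1 ∈ P2) (h2 : μ2 ∈ P2) :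
    OptPlan (pivotMiddle θ μ1 μ2) μ2 = OmegaTheta θ (pivotMiddle θ μ1 μ2) μ2 := by
  rw [pivotMiddle_comm]
  exact OptPlan_pivotMiddle_left hθ h2 h1

end Pivot

section TransportCost

variable {E Ω : Type*} [NormedAddCommGroup E] [MeasurableSpace E] [BorelSpace E]
  [SecondCountableTopology E] [MeasurableSpace Ω] {P : Measure Ω} {X Y Z : Ω → E}

lemma tCost_map_prodMk (hX : Measurable X) (hY : Measurable Y) :
    tCost (P.map fun ω => (X ω, Y ω)) = ∫ ω, ‖X ω - Y ω‖ ^ 2 ∂P :=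
  integral_map (hX.prodMk hY).aemeasurable (Measurable.aestronglyMeasurable (by fun_prop))

lemma tCost_map_swap (π : Measure (E × E)) : tCost (π.map Prod.swap) = tCost π := by
  refine (tCost_map_prodMk measurable_snd measurable_fst).trans ?_
  simp only [tCost, norm_sub_rev]

lemma tCost_map_diag (μ : Measure E) : tCost (μ.map fun x => (x, x)) = 0 := by
  simp [tCost_map_prodMk measurable_id' measurable_id']

lemma sqrt_tCost_map_prodMk (hX : Measurable X) (hY : Measurable Y) :
    √(tCost (P.map fun ω => (X ω, Y ω))) = lpNorm (X - Y) 2 P := by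
  rw [tCost_map_prodMk hX hY, lpNorm_eq_integral_norm_rpow_toReal two_ne_zero
    ENNReal.ofNat_ne_top (hX.sub hY).aestronglyMeasurable, Real.sqrt_eq_rpow]
  simp

lemma sqrt_tCost_map_prodMk_le_add (hX : MemLp X 2 P) (hY : MemLp Y 2 P) (hXm : Measurable X)
    (hYm : Measurable Y) (hZm : Measurable Z) :
    √(tCost (P.map fun ω => (X ω, Z ω))) ≤
      √(tCost (P.map fun ω => (X ω, Y ω))) + √(tCost (P.map fun ω => (Y ω, Z ω))) := by
  simp only [sqrt_tCost_map_prodMk, hXm, hYm, hZm]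
  exact lpNorm_sub_le_lpNorm_sub_add_lpNorm_sub hX hY one_le_two

variable {μ ν : Measure E} {π : Measure (E × E)}

lemma memLp_sub_of_mem_Coupling (hμ : μ ∈ P2) (hν : ν ∈ P2) (hπ : π ∈ Coupling μ ν) :
    MemLp (Prod.fst - Prod.snd) 2 π :=
  ((memLp_id_of_mem_P2 hμ).comp_measurePreserving (measurePreserving_fst_of_mem_Coupling hπ)).sub
    ((memLp_id_of_mem_P2 hν).comp_measurePreserving (measurePreserving_snd_of_mem_Coupling hπ))

lemma integral_norm_sub_le_sqrt_tCost (hμ : μ ∈ P2) (hν : ν ∈ P2) (hπ : π ∈ Coupling μ ν) :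
    ∫ p, ‖p.1 - p.2‖ ∂π ≤ √(tCost π) := by
  have := hπ.1
  have hsub := memLp_sub_of_mem_Coupling hμ hν hπ
  calc ∫ p, ‖p.1 - p.2‖ ∂π
      = (eLpNorm (Prod.fst - Prod.snd) 1 π).toReal := by
        rw [toReal_eLpNorm hsub.1, lpNorm_one_eq_integral_norm hsub.1]
        rfl
    _ ≤ (eLpNorm (Prod.fst - Prod.snd) 2 π).toReal :=
        ENNReal.toReal_mono hsub.2.ne (eLpNorm_le_eLpNorm_of_exponent_le one_le_two hsub.1)
    _ = √(tCost π) := by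
        rw [toReal_eLpNorm hsub.1]
        simpa only [Prod.mk.eta, Measure.map_id'] using
          (sqrt_tCost_map_prodMk (P := π) measurable_fst measurable_snd).symm

lemma norm_integral_sub_integral_le_of_lipschitzWith {F : Type*} [NormedAddCommGroup F]
    [NormedSpace ℝ F] {f : E → F} {K : NNReal} (hf : LipschitzWith K f) (hfμ : Integrable f μ)
    (hfν : Integrable f ν) (hμ : μ ∈ P2) (hν : ν ∈ P2) (hπ : π ∈ Coupling μ ν) :
    ‖∫ x, f x ∂μ - ∫ x, f x ∂ν‖ ≤ K * √(tCost π) := by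
  have := hπ.1
  have hfst := measurePreserving_fst_of_mem_Coupling hπ
  have hsnd := measurePreserving_snd_of_mem_Coupling hπ
  have hnorm : Integrable (fun p => ‖p.1 - p.2‖) π :=
    ((memLp_sub_of_mem_Coupling hμ hν hπ).integrable one_le_two).norm
  have hfπ1 : Integrable (fun p => f p.1) π := hfst.integrable_comp_of_integrable hfμ
  have hfπ2 : Integrable (fun p => f p.2) π := hsnd.integrable_comp_of_integrable hfν
  calc ‖∫ x, f x ∂μ - ∫ x, f x ∂ν‖
      = ‖∫ p, (f p.1 - f p.2) ∂π‖ := by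
        rw [← integral_comp_of_measurePreserving hfst hfμ.aestronglyMeasurable,
          ← integral_comp_of_measurePreserving hsnd hfν.aestronglyMeasurable,
          ← integral_sub hfπ1 hfπ2]
    _ ≤ ∫ p, K * ‖p.1 - p.2‖ ∂π :=
        norm_integral_le_of_norm_le (hnorm.const_mul _) (.of_forall fun p => hf.norm_sub_le p.1 p.2)
    _ ≤ K * √(tCost π) := by
        rw [integral_const_mul]
        gcongr
        exact integral_norm_sub_le_sqrt_tCost hμ hν hπ

end TransportCost

section CharacteristicFunction

variable {E : Type*} [NormedAddCommGroup E] [InnerProductSpace ℝ E]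

lemma lipschitzWith_exp_inner_mul_I (t : E) :
    LipschitzWith ‖t‖₊ fun x => Complex.exp (⟪x, t⟫ * Complex.I) := by
  refine LipschitzWith.of_dist_le_mul fun x y => ?_
  have hcircle := (lipschitzWith_circleMap 0 1).dist_le_mul ⟪x, t⟫ ⟪y, t⟫
  simp only [circleMap_zero, Complex.ofReal_one, one_mul, map_one, NNReal.coe_one] at hcircle
  refine hcircle.trans ?_
  rw [Real.dist_eq, ← inner_sub_left, dist_eq_norm, coe_nnnorm, mul_comm]
  exact abs_real_inner_le_norm _ _

variable [MeasurableSpace E] [BorelSpace E] [SecondCountableTopology E] {μ ν : Measure E}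

lemma norm_charFun_sub_charFun_le (hμ : μ ∈ P2) (hν : ν ∈ P2) {π : Measure (E × E)}
    (hπ : π ∈ Coupling μ ν) (t : E) : ‖charFun μ t - charFun ν t‖ ≤ ‖t‖ * √(tCost π) := by
  have integrable_exp (m : Measure E) [IsFiniteMeasure m] :
      Integrable (fun x => Complex.exp (⟪x, t⟫ * Complex.I)) m :=
    .of_bound (Measurable.aestronglyMeasurable (by fun_prop)) 1
      (.of_forall fun x => (Complex.norm_exp_ofReal_mul_I _).le)
  have := hμ.1
  have := hν.1
  exact norm_integral_sub_integral_le_of_lipschitzWith (lipschitzWith_exp_inner_mul_I t)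
    (integrable_exp μ) (integrable_exp ν) hμ hν hπ

end CharacteristicFunction

section PivotSliced

variable {d : ℕ} {θ : Euc d} {μ1 μ2 μ3 : Measure (Euc d)}

variable [IsProbabilityMeasure μ1] [NullSingletonClass (projLine θ μ1)] [IsProbabilityMeasure μ2]
  [NullSingletonClass (projLine θ μ2)]

lemma pivotCost_eq_tCost_map (ρ : Measure (Euc d × Euc d × Euc d)) :
    pivotCost ρ = tCost (ρ.map fun p => (p.2.1, p.2.2)) :=
  (tCost_map_prodMk (by fun_prop) (by fun_prop)).symm

lemma map_mem_OmegaTheta_of_mem_Gamma_pivotMiddle (hθ : ‖θ‖ = 1) (h1 : μ1 ∈ P2) (h2 : μ2 ∈ P2)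
    {ρ : Measure (Euc d × Euc d × Euc d)} (hρ : ρ ∈ Gamma (pivotMiddle θ μ1 μ2) μ1 μ2) :
    ρ.map (fun p => (p.2.1, p.2.2)) ∈ OmegaTheta θ μ1 μ2 := by
  have := nullSingletonClass_projLine_pivotMiddle (μ1 := μ1) (μ2 := μ2) hθ
  obtain ⟨-, hρ1, hρ2⟩ := hρ
  rw [OptPlan_pivotMiddle_left hθ h1 h2] at hρ1
  rw [OptPlan_pivotMiddle_right hθ h1 h2] at hρ2
  exact OmegaTheta_trans (by fun_prop) (by fun_prop) (by fun_prop) hρ1 hρ2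

lemma exists_mem_Gamma_pivotMiddle_map_eq (hθ : ‖θ‖ = 1) (h1 : μ1 ∈ P2) (h2 : μ2 ∈ P2)
    {ω : Measure (Euc d × Euc d)} (hω : ω ∈ OmegaTheta θ μ1 μ2) :
    ∃ ρ ∈ Gamma (pivotMiddle θ μ1 μ2) μ1 μ2, ρ.map (fun p => (p.2.1, p.2.2)) = ω := by
  have := nullSingletonClass_projLine_pivotMiddle (μ1 := μ1) (μ2 := μ2) hθ
  obtain ⟨α, hα⟩ := OmegaTheta_nonempty (θ := θ) (μ1 := μ1) (μ2 := pivotMiddle θ μ1 μ2)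
  have := hα.1.1
  have := hω.1.1
  obtain ⟨γ, hγα, hγω⟩ := exists_map_eq_and_map_eq_of_map_fst_eq α ω
    (hα.1.2.1.trans hω.1.2.1.symm)
  have hpivot1 : γ.map (fun p => (p.2.1, p.1)) ∈ OmegaTheta θ (pivotMiddle θ μ1 μ2) μ1 := by
    have hswap := map_swap_mem_OmegaTheta hα
    rwa [← hγα, Measure.map_map measurable_swap (by fun_prop)] at hswap
  have hpivot2 : γ.map (fun p => (p.2.1, p.2.2)) ∈ OmegaTheta θ (pivotMiddle θ μ1 μ2) μ2 :=
    OmegaTheta_trans measurable_fst (by fun_prop) (by fun_prop) (hγα ▸ hα) (hγω ▸ hω)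
  have : IsProbabilityMeasure γ := by
    have := hpivot1.1.1
    exact Measure.isProbabilityMeasure_of_map (fun p : Euc d × Euc d × Euc d => (p.2.1, p.1))
  refine ⟨γ.map fun p => (p.2.1, p.1, p.2.2), ⟨Measure.isProbabilityMeasure_map (by fun_prop),
    ?_, ?_⟩, ?_⟩
  · rwa [OptPlan_pivotMiddle_left hθ h1 h2, Measure.map_map (by fun_prop) (by fun_prop)]
  · rwa [OptPlan_pivotMiddle_right hθ h1 h2, Measure.map_map (by fun_prop) (by fun_prop)]
  · rwa [Measure.map_map (by fun_prop) (by fun_prop)]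

theorem PSsq_eq_CWsq (hθ : ‖θ‖ = 1) (h1 : μ1 ∈ P2) (h2 : μ2 ∈ P2) :
    PSsq θ μ1 μ2 = CWsq θ μ1 μ2 := by
  rw [PSsq, Wnusq, CWsq]
  congr 1
  refine Set.Subset.antisymm ?_ ?_
  · rintro _ ⟨ρ, hρ, rfl⟩
    exact ⟨_, map_mem_OmegaTheta_of_mem_Gamma_pivotMiddle hθ h1 h2 hρ,
      (pivotCost_eq_tCost_map ρ).symm⟩
  · rintro _ ⟨ω, hω, rfl⟩
    obtain ⟨ρ, hρ, rfl⟩ := exists_mem_Gamma_pivotMiddle_map_eq hθ h1 h2 hω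
    exact ⟨ρ, hρ, pivotCost_eq_tCost_map ρ⟩

lemma PS_eq_iInf (hθ : ‖θ‖ = 1) (h1 : μ1 ∈ P2) (h2 : μ2 ∈ P2) :
    PS θ μ1 μ2 = ⨅ ω : OmegaTheta θ μ1 μ2, √(tCost ω.1) := by
  have := (OmegaTheta_nonempty (θ := θ) (μ1 := μ1) (μ2 := μ2)).to_subtype
  have hbdd : BddBelow (Set.range fun ω : OmegaTheta θ μ1 μ2 => tCost ω.1) := by
    refine ⟨0, ?_⟩
    rintro _ ⟨ω, rfl⟩
    exact integral_nonneg fun _ => by positivity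
  rw [PS, PSsq_eq_CWsq hθ h1 h2, CWsq, sInf_image']
  exact Monotone.map_ciInf_of_continuousAt Real.continuous_sqrt.continuousAt
    Real.sqrt_monotone hbdd

lemma bddBelow_range_sqrt_tCost {ι : Type*} (π : ι → Measure (Euc d × Euc d)) :
    BddBelow (Set.range fun i => √(tCost (π i))) := by
  refine ⟨0, ?_⟩
  rintro _ ⟨i, rfl⟩
  exact Real.sqrt_nonneg _

lemma PS_le_sqrt_tCost (hθ : ‖θ‖ = 1) (h1 : μ1 ∈ P2) (h2 : μ2 ∈ P2)
    {ω : Measure (Euc d × Euc d)} (hω : ω ∈ OmegaTheta θ μ1 μ2) : PS θ μ1 μ2 ≤ √(tCost ω) := by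
  rw [PS_eq_iInf hθ h1 h2]
  exact ciInf_le (bddBelow_range_sqrt_tCost Subtype.val) ⟨ω, hω⟩

lemma le_PS (hθ : ‖θ‖ = 1) (h1 : μ1 ∈ P2) (h2 : μ2 ∈ P2) {a : ℝ}
    (ha : ∀ ω ∈ OmegaTheta θ μ1 μ2, a ≤ √(tCost ω)) : a ≤ PS θ μ1 μ2 := by
  have := (OmegaTheta_nonempty (θ := θ) (μ1 := μ1) (μ2 := μ2)).to_subtype
  rw [PS_eq_iInf hθ h1 h2]
  exact le_ciInf fun ω => ha ω.1 ω.2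

theorem PS_self (hθ : ‖θ‖ = 1) (h1 : μ1 ∈ P2) : PS θ μ1 μ1 = 0 := by
  refine le_antisymm ?_ (Real.sqrt_nonneg _)
  simpa [tCost_map_diag] using PS_le_sqrt_tCost hθ h1 h1 map_diag_mem_OmegaTheta

lemma PS_le_PS_swap (hθ : ‖θ‖ = 1) (h1 : μ1 ∈ P2) (h2 : μ2 ∈ P2) :
    PS θ μ1 μ2 ≤ PS θ μ2 μ1 :=
  le_PS hθ h2 h1 fun ω hω =>
    tCost_map_swap ω ▸ PS_le_sqrt_tCost hθ h1 h2 (map_swap_mem_OmegaTheta hω)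

theorem PS_comm (hθ : ‖θ‖ = 1) (h1 : μ1 ∈ P2) (h2 : μ2 ∈ P2) : PS θ μ1 μ2 = PS θ μ2 μ1 :=
  le_antisymm (PS_le_PS_swap hθ h1 h2) (PS_le_PS_swap hθ h2 h1)

lemma norm_charFun_sub_charFun_le_PS (hθ : ‖θ‖ = 1) (h1 : μ1 ∈ P2) (h2 : μ2 ∈ P2) (t : Euc d) :
    ‖charFun μ1 t - charFun μ2 t‖ ≤ ‖t‖ * PS θ μ1 μ2 := by
  have := (OmegaTheta_nonempty (θ := θ) (μ1 := μ1) (μ2 := μ2)).to_subtype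
  rw [PS_eq_iInf hθ h1 h2, Real.mul_iInf_of_nonneg (norm_nonneg t)]
  exact le_ciInf fun ω => norm_charFun_sub_charFun_le h1 h2 ω.2.1 t

theorem PS_eq_zero_iff (hθ : ‖θ‖ = 1) (h1 : μ1 ∈ P2) (h2 : μ2 ∈ P2) :
    PS θ μ1 μ2 = 0 ↔ μ1 = μ2 := by
  refine ⟨fun hPS => Measure.ext_of_charFun (funext fun t => ?_), ?_⟩
  · rw [← sub_eq_zero, ← norm_le_zero_iff, ← mul_zero ‖t‖, ← hPS]
    exact norm_charFun_sub_charFun_le_PS hθ h1 h2 t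
  · rintro rfl
    exact PS_self hθ h1

variable [IsProbabilityMeasure μ3] [NullSingletonClass (projLine θ μ3)]

lemma exists_mem_OmegaTheta_sqrt_tCost_le_add (h1 : μ1 ∈ P2) (h2 : μ2 ∈ P2)
    {α β : Measure (Euc d × Euc d)} (hα : α ∈ OmegaTheta θ μ1 μ2) (hβ : β ∈ OmegaTheta θ μ2 μ3) :
    ∃ ω ∈ OmegaTheta θ μ1 μ3, √(tCost ω) ≤ √(tCost α) + √(tCost β) := by
  have hswap := map_swap_mem_OmegaTheta hα
  have := hswap.1.1
  have := hβ.1.1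
  obtain ⟨γ, hγα, hγβ⟩ := exists_map_eq_and_map_eq_of_map_fst_eq (α.map Prod.swap) β
    (hswap.1.2.1.trans hβ.1.2.1.symm)
  rw [← hγα] at hswap
  rw [← hγβ] at hβ
  have hγ13 := OmegaTheta_trans measurable_fst (by fun_prop) (by fun_prop) hswap hβ
  obtain ⟨h2X, h1Y, -⟩ :=
    (map_prodMk_mem_OmegaTheta_iff measurable_fst (by fun_prop)).1 hswap
  refine ⟨_, hγ13, ?_⟩
  calc √(tCost (γ.map fun p => (p.2.1, p.2.2)))
      ≤ √(tCost (γ.map fun p => (p.2.1, p.1))) + √(tCost (γ.map fun p => (p.1, p.2.2))) :=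
        sqrt_tCost_map_prodMk_le_add ((memLp_id_of_mem_P2 h1).comp_measurePreserving h1Y)
          ((memLp_id_of_mem_P2 h2).comp_measurePreserving h2X) (by fun_prop) (by fun_prop)
          (by fun_prop)
    _ = √(tCost α) + √(tCost β) := by
        rw [hγβ, ← tCost_map_swap α, ← hγα, tCost_map_prodMk (by fun_prop) (by fun_prop),
          tCost_map_prodMk (by fun_prop) (by fun_prop)]
        simp only [norm_sub_rev]

theorem PS_triangle (hθ : ‖θ‖ = 1) (h1 : μ1 ∈ P2) (h2 : μ2 ∈ P2) (h3 : μ3 ∈ P2) :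
    PS θ μ1 μ3 ≤ PS θ μ1 μ2 + PS θ μ2 μ3 := by
  have := (OmegaTheta_nonempty (θ := θ) (μ1 := μ1) (μ2 := μ2)).to_subtype
  have := (OmegaTheta_nonempty (θ := θ) (μ1 := μ2) (μ2 := μ3)).to_subtype
  rw [PS_eq_iInf hθ h1 h2, PS_eq_iInf hθ h2 h3]
  refine le_ciInf_add_ciInf fun α β => ?_
  obtain ⟨ω, hω, hle⟩ := exists_mem_OmegaTheta_sqrt_tCost_le_add h1 h2 α.2 β.2
  exact (PS_le_sqrt_tCost hθ h1 h3 hω).trans hle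

end PivotSliced

/-- `PS_θ` is a metric on the set of measures with atomless projections:
non-negativity, separation, symmetry and the triangle inequality. -/
theorem PS_metric_on_atomless {d : ℕ} (θ : Euc d) (hθ : ‖θ‖ = 1) :
    (∀ μ1 ∈ P2a θ, ∀ μ2 ∈ P2a θ,
      0 ≤ PS θ μ1 μ2 ∧ (PS θ μ1 μ2 = 0 ↔ μ1 = μ2) ∧ PS θ μ1 μ2 = PS θ μ2 μ1) ∧
    (∀ μ1 ∈ P2a θ, ∀ μ2 ∈ P2a θ, ∀ μ3 ∈ P2a θ,
      PS θ μ1 μ3 ≤ PS θ μ1 μ2 + PS θ μ2 μ3) := by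
  have isProbabilityMeasure {μ} (h : μ ∈ P2a θ) : IsProbabilityMeasure μ := h.1.1
  have nullSingletonClass {μ} (h : μ ∈ P2a θ) : NullSingletonClass (projLine θ μ) := ⟨h.2⟩
  refine ⟨fun μ1 h1 μ2 h2 => ?_, fun μ1 h1 μ2 h2 μ3 h3 => ?_⟩
  · have := isProbabilityMeasure h1
    have := isProbabilityMeasure h2
    have := nullSingletonClass h1
    have := nullSingletonClass h2
    exact ⟨Real.sqrt_nonneg _, PS_eq_zero_iff hθ h1.1 h2.1, PS_comm hθ h1.1 h2.1⟩
  · have := isProbabilityMeasure h1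
    have := isProbabilityMeasure h2
    have := isProbabilityMeasure h3
    have := nullSingletonClass h1
    have := nullSingletonClass h2
    have := nullSingletonClass h3
    exact PS_triangle hθ h1.1 h2.1 h3.1

end
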